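/- Let A > 0, C > 0 and p > 2 be real numbers, and for ε > 0 define f_ε : ℝ → ℝ by f_ε(x) = A |x|^{1/6} / ( |x|^{2/3} + ε^{2/3} C ). Set K = A^p ∫_{−∞}^{∞} |y|^{p/6} / ( |y|^{2/3} + C )^p dy (a finite positive real number). Then for every infinitely differentiable function φ : ℝ → ℝ with compact support, ∫_{−∞}^{∞} ε^{(p−2)/2} f_ε(x)^p φ(x) dx → K · φ(0) as ε → 0⁺. In other words, ε^{(p−2)/2} f_ε^p converges to K·δ(x) in the sense of distributions, where δ is the Dirac distribution at the origin. -/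

import Mathlib

open MeasureTheory

/-!
Writing `h(x) = |x|^a / (|x|^b + C)`, replacing `C` by `ε^b C` only rescales the profile:
`x ↦ |x|^a / (|x|^b + ε^b C)` equals `ε^(a-b) h(x/ε)`. Hence `ε^((b-a)p-1)` times its `p`-th power
is the mass-preserving dilation `ε⁻¹ h(x/ε)^p`. Since `h(x)^p ≤ |x|^(-(b-a)p)` with `(b-a)p > 1`,
the kernel `h^p` is integrable and `|x| h(x)^p → 0` at infinity, so its dilations are an
approximate identity of mass `∫ h^p`.
-/

open Filter Topology Bornology Module

section ApproximateIdentity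

variable {F E : Type*} [NormedAddCommGroup F] [NormedSpace ℝ F] [FiniteDimensional ℝ F]
  [MeasurableSpace F] [BorelSpace F] {μ : Measure F} [μ.IsAddHaarMeasure]
  [NormedAddCommGroup E] [NormedSpace ℝ E] [CompleteSpace E]

theorem tendsto_integral_dilation_smul {k : F → ℝ} (hk : ∀ x, 0 ≤ k x) (hmass : 0 < ∫ x, k x ∂μ)
    (hdecay : Tendsto (fun x ↦ ‖x‖ ^ finrank ℝ F * k x) (cobounded F) (𝓝 0))
    {g : F → E} (hg : Integrable g μ) (hg₀ : ContinuousAt g 0) :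
    Tendsto (fun ε : ℝ ↦ ∫ x, (ε⁻¹ ^ finrank ℝ F * k (ε⁻¹ • x)) • g x ∂μ) (𝓝[>] 0)
      (𝓝 ((∫ x, k x ∂μ) • g 0)) := by
  set m := ∫ x, k x ∂μ with hm
  have hnorm : ∫ x, m⁻¹ * k x ∂μ = 1 := by
    rw [integral_const_mul, ← hm, inv_mul_cancel₀ hmass.ne']
  have hdecay' : Tendsto (fun x ↦ ‖x‖ ^ finrank ℝ F * (m⁻¹ * k x)) (cobounded F) (𝓝 0) := by
    simpa only [mul_zero, mul_left_comm] using hdecay.const_mul m⁻¹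
  have hlim := ((tendsto_integral_comp_smul_smul_of_integrable
    (fun x ↦ mul_nonneg (inv_nonneg.2 hmass.le) (hk x)) hnorm hdecay' hg hg₀).comp
      tendsto_inv_nhdsGT_zero).const_smul m
  refine hlim.congr fun ε ↦ ?_
  rw [Function.comp_apply, ← integral_smul]
  refine integral_congr_ae (.of_forall fun x ↦ ?_)
  simp only [smul_smul]
  congr 1
  field_simp

end ApproximateIdentity

/-- The profile `|x|^a / (|x|^b + C)` of a blow-up family. For `a = 1/6` and `b = 2/3` it is, up to
the amplitude `A`, the modulus of the stationary solution `ψ₀`. -/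
noncomputable def blowupProfile (a b C x : ℝ) : ℝ :=
  |x| ^ a / (|x| ^ b + C)

namespace blowupProfile

variable {a b C p : ℝ}

theorem nonneg (hC : 0 ≤ C) (x : ℝ) : 0 ≤ blowupProfile a b C x := by
  unfold blowupProfile
  positivity

theorem pos (hC : 0 ≤ C) {x : ℝ} (hx : x ≠ 0) : 0 < blowupProfile a b C x := by
  unfold blowupProfile
  positivity

theorem apply_neg (x : ℝ) : blowupProfile a b C (-x) = blowupProfile a b C x := by
  rw [blowupProfile, blowupProfile, abs_neg]

theorem rpow_eq (hC : 0 ≤ C) (x : ℝ) :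
    blowupProfile a b C x ^ p = |x| ^ (a * p) / (|x| ^ b + C) ^ p := by
  rw [blowupProfile, Real.div_rpow (by positivity) (by positivity),
    ← Real.rpow_mul (abs_nonneg x)]

theorem continuous_rpow (ha : 0 ≤ a) (hb : 0 ≤ b) (hC : 0 < C) (hp : 0 ≤ p) :
    Continuous fun x ↦ blowupProfile a b C x ^ p := by
  have hden (x : ℝ) : |x| ^ b + C ≠ 0 := by positivity
  exact ((continuous_abs.rpow_const fun _ ↦ .inr ha).div
    ((continuous_abs.rpow_const fun _ ↦ .inr hb).add continuous_const) hden).rpow_const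
      fun _ ↦ .inr hp

theorem le_rpow_sub (hC : 0 ≤ C) {x : ℝ} (hx : x ≠ 0) :
    blowupProfile a b C x ≤ |x| ^ (a - b) := by
  rw [blowupProfile, Real.rpow_sub (abs_pos.2 hx)]
  gcongr
  exact le_add_of_nonneg_right hC

theorem rpow_le (hC : 0 ≤ C) (hp : 0 ≤ p) {x : ℝ} (hx : x ≠ 0) :
    blowupProfile a b C x ^ p ≤ |x| ^ (-((b - a) * p)) :=
  calc blowupProfile a b C x ^ p ≤ (|x| ^ (a - b)) ^ p :=
        Real.rpow_le_rpow (nonneg hC x) (le_rpow_sub hC hx) hp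
    _ = |x| ^ (-((b - a) * p)) := by
        rw [← Real.rpow_mul (abs_nonneg x), ← neg_mul, neg_sub]

theorem integrable_rpow (ha : 0 ≤ a) (hC : 0 < C) (hp : 0 < p) (hdecay : 1 < (b - a) * p) :
    Integrable fun x ↦ blowupProfile a b C x ^ p := by
  have hb : 0 ≤ b := by linarith [pos_of_mul_pos_left (one_pos.trans hdecay) hp.le]
  refine (continuous_rpow ha hb hC hp.le).locallyIntegrable
    |>.integrable_of_isBigO_atTop_of_norm_isNegInvariant (g := fun x ↦ x ^ (-((b - a) * p)))
      (.of_forall fun x ↦ by simp only [Function.comp_apply, apply_neg])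
      (.of_bound' ?_) (integrableAtFilter_rpow_atTop_iff.2 (by linarith))
  filter_upwards [eventually_gt_atTop 0] with x hx
  rw [Real.norm_of_nonneg (Real.rpow_nonneg (nonneg hC.le x) p),
    Real.norm_of_nonneg (Real.rpow_nonneg hx.le _)]
  simpa only [abs_of_pos hx] using rpow_le hC.le hp.le hx.ne'

theorem integral_rpow_pos (ha : 0 ≤ a) (hC : 0 < C) (hp : 0 < p) (hdecay : 1 < (b - a) * p) :
    0 < ∫ x, blowupProfile a b C x ^ p := by
  have hb : 0 ≤ b := by linarith [pos_of_mul_pos_left (one_pos.trans hdecay) hp.le]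
  exact integral_pos_of_integrable_nonneg_nonzero (x := 1) (continuous_rpow ha hb hC hp.le)
    (integrable_rpow ha hC hp hdecay) (fun x ↦ Real.rpow_nonneg (nonneg hC.le x) p)
    (Real.rpow_pos_of_pos (pos hC.le one_ne_zero) p).ne'

theorem tendsto_norm_mul_rpow_cobounded (hC : 0 ≤ C) (hp : 0 ≤ p) (hdecay : 1 < (b - a) * p) :
    Tendsto (fun x ↦ ‖x‖ * blowupProfile a b C x ^ p) (cobounded ℝ) (𝓝 0) := by
  have hmajorant : Tendsto (fun x : ℝ ↦ ‖x‖ ^ (-((b - a) * p - 1))) (cobounded ℝ) (𝓝 0) :=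
    (tendsto_rpow_neg_atTop (sub_pos.2 hdecay)).comp tendsto_norm_cobounded_atTop
  refine squeeze_zero' (.of_forall fun x ↦ mul_nonneg (norm_nonneg x)
    (Real.rpow_nonneg (nonneg hC x) p)) ?_ hmajorant
  filter_upwards [eventually_ne_cobounded (0 : ℝ)] with x hx
  calc ‖x‖ * blowupProfile a b C x ^ p ≤ |x| * |x| ^ (-((b - a) * p)) := by
        rw [Real.norm_eq_abs]
        gcongr
        exact rpow_le hC hp hx
    _ = ‖x‖ ^ (-((b - a) * p - 1)) := by
        rw [Real.norm_eq_abs, ← Real.rpow_one_add' (abs_nonneg x) (by linarith)]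
        congr 1
        ring

theorem rescale_const {ε : ℝ} (hε : 0 < ε) (x : ℝ) :
    blowupProfile a b (ε ^ b * C) x = ε ^ (a - b) * blowupProfile a b C (ε⁻¹ * x) := by
  have habs : |x| = ε * |ε⁻¹ * x| := by
    rw [abs_mul, abs_of_pos (inv_pos.2 hε), mul_inv_cancel_left₀ hε.ne']
  rw [blowupProfile, blowupProfile, habs, Real.mul_rpow hε.le (abs_nonneg _),
    Real.mul_rpow hε.le (abs_nonneg _), ← mul_add, mul_div_mul_comm, Real.rpow_sub hε]

theorem rescale_const_rpow (hC : 0 ≤ C) {ε : ℝ} (hε : 0 < ε) (x : ℝ) :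
    ε ^ ((b - a) * p - 1) * blowupProfile a b (ε ^ b * C) x ^ p =
      ε⁻¹ * blowupProfile a b C (ε⁻¹ * x) ^ p := by
  rw [rescale_const hε, Real.mul_rpow (Real.rpow_nonneg hε.le _) (nonneg hC _),
    ← Real.rpow_mul hε.le, ← mul_assoc, ← Real.rpow_add hε, ← Real.rpow_neg_one]
  congr 2
  ring

theorem tendsto_integral_rpow_smul {E : Type*} [NormedAddCommGroup E] [NormedSpace ℝ E]
    [CompleteSpace E] (ha : 0 ≤ a) (hC : 0 < C) (hp : 0 < p) (hdecay : 1 < (b - a) * p)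
    {φ : ℝ → E} (hφ : Integrable φ) (hφ₀ : ContinuousAt φ 0) :
    Tendsto (fun ε : ℝ ↦
        ∫ x, (ε ^ ((b - a) * p - 1) * blowupProfile a b (ε ^ b * C) x ^ p) • φ x)
      (𝓝[>] 0) (𝓝 ((∫ x, blowupProfile a b C x ^ p) • φ 0)) := by
  have hlim := tendsto_integral_dilation_smul (μ := volume)
    (fun x ↦ Real.rpow_nonneg (nonneg hC.le x) p) (integral_rpow_pos ha hC hp hdecay)
    (by simpa only [finrank_self, pow_one]
      using tendsto_norm_mul_rpow_cobounded hC.le hp.le hdecay) hφ hφ₀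
  refine hlim.congr' ?_
  filter_upwards [self_mem_nhdsWithin] with ε hε
  simp only [finrank_self, pow_one, smul_eq_mul, rescale_const_rpow hC.le hε]

end blowupProfile

theorem delta_blowup_distributional_general {E : Type*} [NormedAddCommGroup E] [NormedSpace ℝ E]
    [CompleteSpace E] {a b A C p : ℝ} (ha : 0 ≤ a) (hA : 0 < A) (hC : 0 < C) (hp : 0 < p)
    (hdecay : 1 < (b - a) * p) (f : ℝ → ℝ → ℝ)
    (hf : ∀ ε x : ℝ, 0 < ε → f ε x = A * |x| ^ a / (|x| ^ b + ε ^ b * C))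
    (K : ℝ) (hK : K = A ^ p * ∫ y : ℝ, |y| ^ (a * p) / (|y| ^ b + C) ^ p) :
    Integrable (fun y : ℝ ↦ |y| ^ (a * p) / (|y| ^ b + C) ^ p) ∧
    0 < K ∧
    ∀ φ : ℝ → E, Integrable φ → ContinuousAt φ 0 →
      Tendsto (fun ε ↦ ∫ x : ℝ, (ε ^ ((b - a) * p - 1) * f ε x ^ p) • φ x)
        (𝓝[>] 0) (𝓝 (K • φ 0)) := by
  simp only [← blowupProfile.rpow_eq hC.le] at hK ⊢
  refine ⟨blowupProfile.integrable_rpow ha hC hp hdecay, ?_, fun φ hφ hφ₀ ↦ ?_⟩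
  · exact hK ▸ mul_pos (Real.rpow_pos_of_pos hA p)
      (blowupProfile.integral_rpow_pos ha hC hp hdecay)
  have hlim :=
    (blowupProfile.tendsto_integral_rpow_smul ha hC hp hdecay hφ hφ₀).const_smul (A ^ p)
  rw [smul_smul, ← hK] at hlim
  refine hlim.congr' ?_
  filter_upwards [self_mem_nhdsWithin] with ε (hε : 0 < ε)
  have hfp (x : ℝ) : f ε x ^ p = A ^ p * blowupProfile a b (ε ^ b * C) x ^ p := by
    rw [hf ε x hε, mul_div_assoc, ← blowupProfile,
      Real.mul_rpow hA.le (blowupProfile.nonneg (by positivity) x)]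
  simp only [hfp, mul_left_comm _ (A ^ p), mul_smul (A ^ p), integral_smul]

/-- δ-blow-up in the sense of distributions: with
`f_ε(x) = A|x|^{1/6}/(|x|^{2/3} + ε^{2/3}C)` and
`K = A^p ∫ |y|^{p/6}/(|y|^{2/3} + C)^p dy` (a finite positive real number), for every smooth
compactly supported test function `φ`,
`∫ ε^{(p-2)/2} f_ε(x)^p φ(x) dx → K φ(0)` as `ε → 0⁺`; that is,
`ε^{(p-2)/2} f_ε^p → K δ(x)` in the sense of generalized functions. -/
theorem delta_blowup_distributional (A C p : ℝ) (hA : 0 < A) (hC : 0 < C) (hp : 2 < p)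
    (f : ℝ → ℝ → ℝ)
    (hf : ∀ ε x : ℝ, 0 < ε →
      f ε x = A * |x| ^ ((1 : ℝ) / 6) / (|x| ^ ((2 : ℝ) / 3) + ε ^ ((2 : ℝ) / 3) * C))
    (K : ℝ)
    (hK : K = A ^ p * ∫ y : ℝ, |y| ^ (p / 6) / (|y| ^ ((2 : ℝ) / 3) + C) ^ p) :
    Integrable (fun y : ℝ => |y| ^ (p / 6) / (|y| ^ ((2 : ℝ) / 3) + C) ^ p) ∧
    0 < K ∧
    ∀ φ : ℝ → ℝ, ContDiff ℝ (⊤ : ℕ∞) φ → HasCompactSupport φ →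
      Filter.Tendsto (fun ε => ∫ x : ℝ, ε ^ ((p - 2) / 2) * f ε x ^ p * φ x)
        (nhdsWithin 0 (Set.Ioi 0)) (nhds (K * φ 0)) := by
  simp only [show (p - 2) / 2 = (2 / 3 - 1 / 6) * p - 1 by ring, ← one_div_mul_eq_div 6 p] at hK ⊢
  exact (delta_blowup_distributional_general (by norm_num) hA hC (by linarith) (by linarith)
    f hf K hK).imp_right <| And.imp_right fun hlim φ hφ hsupp ↦
      hlim φ (hφ.continuous.integrable_of_hasCompactSupport hsupp) hφ.continuous.continuousAt
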